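/- Let s > 1, let r, q ∈ [1,∞] with r ≤ q, let ω and θ be s-admissible weights on ℝ^d with ω(ξ) ≤ C·θ(ξ) for all ξ and some constant C > 0, let f ∈ L¹(ℝ^d) have compact support, and let φ be an s-cutoff. Then WF_{FL^q_ω}(φf) ⊆ WF_{FL^r_θ}(f). -/

import Mathlib

open MeasureTheory Complex Set
open scoped ENNReal RealInnerProductSpace NNReal

noncomputable section

namespace Paper

variable {d : ℕ}

/-- The Fourier transform, normalized by `(2π)^{-d/2}`. -/
def FT (f : EuclideanSpace ℝ (Fin d) → ℂ) (ξ : EuclideanSpace ℝ (Fin d)) : ℂ :=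
  ((2 * Real.pi) ^ (-(d : ℝ) / 2) : ℝ) *
    ∫ x, f x * Complex.exp (-(⟪x, ξ⟫ : ℝ) * Complex.I)

/-- The short-time Fourier transform `V_φ f (x, ξ)`. -/
def STFT (φ f : EuclideanSpace ℝ (Fin d) → ℂ) (x ξ : EuclideanSpace ℝ (Fin d)) : ℂ :=
  ((2 * Real.pi) ^ (-(d : ℝ) / 2) : ℝ) *
    ∫ y, f y * (starRingEnd ℂ) (φ (y - x)) * Complex.exp (-(⟪ξ, y⟫ : ℝ) * Complex.I)

/-- A cone in `ℝ^d ∖ {0}`. -/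
def IsCone (Γ : Set (EuclideanSpace ℝ (Fin d))) : Prop :=
  (0 : EuclideanSpace ℝ (Fin d)) ∉ Γ ∧ ∀ ξ ∈ Γ, ∀ t : ℝ, 0 < t → t • ξ ∈ Γ

/-- An `s`-cutoff: smooth, compactly supported, with Fourier transform decaying faster
than every `exp (-N |ξ|^{1/s})`. -/
def IsSCutoff (s : ℝ) (φ : EuclideanSpace ℝ (Fin d) → ℂ) : Prop :=
  ContDiff ℝ (⊤ : ℕ∞) φ ∧ HasCompactSupport φ ∧
    ∀ N : ℝ, 0 < N → ∃ C : ℝ, 0 < C ∧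
      ∀ ξ, ‖FT φ ξ‖ ≤ C * Real.exp (-N * ‖ξ‖ ^ (1 / s))

/-- An `s`-admissible weight: positive, measurable, and moderate with respect to an even
submultiplicative weight of sub-exponential growth of order `1/s`. -/
def IsSAdmissible (s : ℝ) (ω : EuclideanSpace ℝ (Fin d) → ℝ) : Prop :=
  Measurable ω ∧ (∀ x, 0 < ω x) ∧
    ∃ v : EuclideanSpace ℝ (Fin d) → ℝ, Measurable v ∧ (∀ x, 0 < v x) ∧
      (∀ x, v (-x) = v x) ∧ (∀ x y, v (x + y) ≤ v x * v y) ∧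
      ∃ C₀ k₀ C₁ : ℝ, 0 < C₀ ∧ 0 < k₀ ∧ 0 < C₁ ∧
        (∀ ξ, v ξ ≤ C₀ * Real.exp (k₀ * ‖ξ‖ ^ (1 / s))) ∧
        ∀ x y, ω (x + y) ≤ C₁ * v x * ω y

/-- The Fourier–Lebesgue seminorm `( ∫_Γ (|f̂| ω)^q )^{1/q}` (ess-sup when `q = ∞`). -/
def FLSemi (ω : EuclideanSpace ℝ (Fin d) → ℝ) (q : ℝ≥0∞)
    (f : EuclideanSpace ℝ (Fin d) → ℂ) (Γ : Set (EuclideanSpace ℝ (Fin d))) : ℝ≥0∞ :=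
  eLpNorm (fun ξ => ‖FT f ξ‖ * ω ξ) q (volume.restrict Γ)

/-- The Fourier–Lebesgue wave-front set `WF_{FL^q_ω} f`. -/
def WF_FL (s : ℝ) (q : ℝ≥0∞) (ω : EuclideanSpace ℝ (Fin d) → ℝ)
    (f : EuclideanSpace ℝ (Fin d) → ℂ) :
    Set (EuclideanSpace ℝ (Fin d) × EuclideanSpace ℝ (Fin d)) :=
  {z | z.2 ≠ 0 ∧ ∀ φ : EuclideanSpace ℝ (Fin d) → ℂ, IsSCutoff s φ → φ z.1 ≠ 0 →
    ∀ Γ : Set (EuclideanSpace ℝ (Fin d)), IsOpen Γ → IsCone Γ → z.2 ∈ Γ →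
      FLSemi ω q (fun x => φ x * f x) Γ = ∞}

/-- The `s`-wave-front set `WF_s f`. -/
def WFs (s : ℝ) (f : EuclideanSpace ℝ (Fin d) → ℂ) :
    Set (EuclideanSpace ℝ (Fin d) × EuclideanSpace ℝ (Fin d)) :=
  {z | z.2 ≠ 0 ∧ ¬ ∃ φ : EuclideanSpace ℝ (Fin d) → ℂ, IsSCutoff s φ ∧
    (∃ U : Set (EuclideanSpace ℝ (Fin d)), IsOpen U ∧ z.1 ∈ U ∧ ∀ x ∈ U, φ x = 1) ∧
    ∃ Γ : Set (EuclideanSpace ℝ (Fin d)), IsOpen Γ ∧ IsCone Γ ∧ z.2 ∈ Γ ∧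
      ∃ C k : ℝ, 0 < C ∧ 0 < k ∧
        ∀ ξ ∈ Γ, ‖FT (fun x => φ x * f x) ξ‖ ≤ C * Real.exp (-k * ‖ξ‖ ^ (1 / s))}

/-- The mixed modulation-space seminorm
`( ∫_Γ ( ∫ |V_g F(x,ξ)|^p dx )^{q/p} ω(ξ)^q dξ )^{1/q}` with the usual
ess-sup interpretations for `p = ∞` or `q = ∞`. -/
def ModSemi (g F : EuclideanSpace ℝ (Fin d) → ℂ) (ω : EuclideanSpace ℝ (Fin d) → ℝ)
    (p q : ℝ≥0∞) (Γ : Set (EuclideanSpace ℝ (Fin d))) : ℝ≥0∞ :=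
  if q = ∞ then
    essSup (fun ξ => eLpNorm (fun x => STFT g F x ξ) p volume * ENNReal.ofReal (ω ξ))
      (volume.restrict Γ)
  else
    (∫⁻ ξ in Γ, (eLpNorm (fun x => STFT g F x ξ) p volume * ENNReal.ofReal (ω ξ)) ^ q.toReal) ^
      (1 / q.toReal)

/-- The modulation wave-front set `WF_{M^{p,q}_ω} f`, with window `g`. -/
def WF_M (s : ℝ) (p q : ℝ≥0∞) (ω : EuclideanSpace ℝ (Fin d) → ℝ)
    (g f : EuclideanSpace ℝ (Fin d) → ℂ) :
    Set (EuclideanSpace ℝ (Fin d) × EuclideanSpace ℝ (Fin d)) :=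
  {z | z.2 ≠ 0 ∧ ∀ φ : EuclideanSpace ℝ (Fin d) → ℂ, IsSCutoff s φ → φ z.1 ≠ 0 →
    ∀ Γ : Set (EuclideanSpace ℝ (Fin d)), IsOpen Γ → IsCone Γ → z.2 ∈ Γ →
      ModSemi g (fun x => φ x * f x) ω p q Γ = ∞}

/-- Reinterpret a plain vector as a point of Euclidean space. -/
def toE (x : Fin d → ℝ) : EuclideanSpace ℝ (Fin d) :=
  (EuclideanSpace.equiv (Fin d) ℝ).symm x

/-- The point `A k` of the lattice `A(ℤ^d)`. -/
def latPt (A : Matrix (Fin d) (Fin d) ℝ) (k : Fin d → ℤ) : EuclideanSpace ℝ (Fin d) :=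
  toE (A.mulVec fun i => (k i : ℝ))

/-- The point `c (Aᵀ)⁻¹ k` of the dual lattice `c (Aᵀ)⁻¹(ℤ^d)`. -/
def dualLatPt (A : Matrix (Fin d) (Fin d) ℝ) (c : ℝ) (k : Fin d → ℤ) :
    EuclideanSpace ℝ (Fin d) :=
  toE (c • (A.transpose⁻¹.mulVec fun i => (k i : ℝ)))

/-- The parallelepiped `x₁ + A([0,1]^d)`. -/
def lattPara (A : Matrix (Fin d) (Fin d) ℝ) (x₁ : EuclideanSpace ℝ (Fin d)) :
    Set (EuclideanSpace ℝ (Fin d)) :=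
  (fun t : Fin d → ℝ => x₁ + toE (A.mulVec t)) '' (Set.univ.pi fun _ => Set.Icc 0 1)

/-- The adjoint short-time Fourier transform `V*_φ F`. -/
def VStar (φ : EuclideanSpace ℝ (Fin d) → ℂ)
    (F : EuclideanSpace ℝ (Fin d) × EuclideanSpace ℝ (Fin d) → ℂ)
    (t : EuclideanSpace ℝ (Fin d)) : ℂ :=
  ((2 * Real.pi) ^ (-(d : ℝ) / 2) : ℝ) *
    ∫ z : EuclideanSpace ℝ (Fin d) × EuclideanSpace ℝ (Fin d),
      F z * Complex.exp ((⟪z.2, t⟫ : ℝ) * Complex.I) * φ (t - z.1)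

/-!
Let `ψ` be a cutoff for which `FT (ψ f) θ` has finite `L^r` norm on an open cone `Γ`. Then
`FT (φ ψ f)` is a multiple of the convolution `∫ FT φ ζ * FT (ψ f) (ξ - ζ) dζ`, and we look at it
for `ξ` in a smaller cone `Γ'` whose points satisfy `c ‖ξ‖ ≤ ‖ξ - η‖` for all `η ∉ Γ`.

* If `ξ - ζ ∈ Γ`, moderateness moves the weight from `ξ` to `ξ - ζ` at the cost of a factor
  `exp (k ‖ζ‖ ^ (1 / s))`, which the decay of `FT φ` absorbs. What is left is the convolution of a
  kernel in `L¹ ∩ L^∞` with a function in `L^r`, so it lies in `L^r ∩ L^∞ ⊆ L^q`.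
* If `ξ - ζ ∉ Γ`, then `c ‖ξ‖ ≤ ‖ζ‖`, so the decay of `FT φ` in `ζ` also beats the growth of the
  weight in `ξ`, while `FT (ψ f)` is merely bounded.
-/

open scoped Pointwise FourierTransform Convolution

section Lp

theorem eLpNorm_lt_top_of_exponent_le_of_top {α ε : Type*} [MeasurableSpace α] [ENorm ε]
    {μ : Measure α} {f : α → ε} {r q : ℝ≥0∞} (hr : r ≠ 0) (hrq : r ≤ q)
    (hfr : eLpNorm f r μ < ∞) (hfb : eLpNorm f ∞ μ < ∞) : eLpNorm f q μ < ∞ := by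
  rcases eq_or_ne q ∞ with rfl | hq
  · exact hfb
  have hr_top : r ≠ ∞ := ne_top_of_le_ne_top hq hrq
  rw [eLpNorm_lt_top_iff_lintegral_rpow_enorm_lt_top hr hr_top] at hfr
  rw [eLpNorm_lt_top_iff_lintegral_rpow_enorm_lt_top (hr.bot_lt.trans_le hrq).ne' hq]
  rw [eLpNorm_exponent_top] at hfb
  have hsub : 0 ≤ q.toReal - r.toReal := sub_nonneg.2 (ENNReal.toReal_mono hq hrq)
  have hpow : eLpNormEssSup f μ ^ (q.toReal - r.toReal) < ∞ :=
    ENNReal.rpow_lt_top_of_nonneg hsub hfb.ne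
  calc ∫⁻ x, ‖f x‖ₑ ^ q.toReal ∂μ
      ≤ ∫⁻ x, eLpNormEssSup f μ ^ (q.toReal - r.toReal) * ‖f x‖ₑ ^ r.toReal ∂μ := by
        refine lintegral_mono_ae ?_
        filter_upwards [enorm_ae_le_eLpNormEssSup f μ] with x hx
        calc ‖f x‖ₑ ^ q.toReal = ‖f x‖ₑ ^ (q.toReal - r.toReal) * ‖f x‖ₑ ^ r.toReal := by
              rw [← ENNReal.rpow_add_of_nonneg _ _ hsub ENNReal.toReal_nonneg, sub_add_cancel]
          _ ≤ _ := by gcongr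
    _ = eLpNormEssSup f μ ^ (q.toReal - r.toReal) * ∫⁻ x, ‖f x‖ₑ ^ r.toReal ∂μ :=
        lintegral_const_mul' _ _ hpow.ne
    _ < ∞ := ENNReal.mul_lt_top hpow hfr

theorem rpow_lintegral_mul_le {α : Type*} [MeasurableSpace α] {μ : Measure α} {h f : α → ℝ≥0∞}
    (hh : AEMeasurable h μ) (hf : AEMeasurable f μ) {p : ℝ} (hp : 1 ≤ p) :
    (∫⁻ x, h x * f x ∂μ) ^ p ≤ (∫⁻ x, h x ∂μ) ^ (p - 1) * ∫⁻ x, h x * f x ^ p ∂μ := by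
  have hp₀ : 0 < p := by positivity
  have hinv : 0 ≤ 1 - p⁻¹ := sub_nonneg.2 (inv_le_one_of_one_le₀ hp)
  have hsplit (x : α) : h x ^ (1 - p⁻¹) * (h x * f x ^ p) ^ p⁻¹ = h x * f x := by
    rw [ENNReal.mul_rpow_of_nonneg _ _ (by positivity), ENNReal.rpow_rpow_inv hp₀.ne',
      ← mul_assoc, ← ENNReal.rpow_add_of_nonneg _ _ hinv (by positivity), sub_add_cancel,
      ENNReal.rpow_one]
  have holder := ENNReal.lintegral_mul_norm_pow_le hh (hh.mul (hf.pow_const p)) hinv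
    (inv_nonneg.2 hp₀.le) (sub_add_cancel 1 p⁻¹)
  simp only [Pi.mul_apply, hsplit] at holder
  calc (∫⁻ x, h x * f x ∂μ) ^ p
      ≤ ((∫⁻ x, h x ∂μ) ^ (1 - p⁻¹) * (∫⁻ x, h x * f x ^ p ∂μ) ^ p⁻¹) ^ p := by gcongr
    _ = (∫⁻ x, h x ∂μ) ^ (p - 1) * ∫⁻ x, h x * f x ^ p ∂μ := by
      rw [ENNReal.mul_rpow_of_nonneg _ _ hp₀.le, ENNReal.rpow_inv_rpow hp₀.ne', ← ENNReal.rpow_mul,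
        sub_mul, inv_mul_cancel₀ hp₀.ne', one_mul]

end Lp

section Young

variable {G : Type*} [AddCommGroup G] [MeasurableSpace G] [MeasurableAdd₂ G] [MeasurableNeg G]
  {μ : Measure G} {h u : G → ℝ≥0∞} {r q : ℝ≥0∞}

theorem rpow_lconvolution_le (hh : Measurable h) (hu : Measurable u) {p : ℝ} (hp : 1 ≤ p) (x : G) :
    (h ⋆ₗ[μ] u) x ^ p ≤ (∫⁻ y, h y ∂μ) ^ (p - 1) * (h ⋆ₗ[μ] fun y => u y ^ p) x :=
  rpow_lintegral_mul_le hh.aemeasurable (by fun_prop) hp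

variable [μ.IsAddLeftInvariant]

theorem lintegral_lconvolution [SFinite μ] (hh : Measurable h) (hu : Measurable u) :
    ∫⁻ x, (h ⋆ₗ[μ] u) x ∂μ = (∫⁻ x, h x ∂μ) * ∫⁻ x, u x ∂μ := by
  simp only [lconvolution_def]
  rw [lintegral_lintegral_swap (by fun_prop), ← lintegral_mul_const _ hh]
  refine lintegral_congr fun y => ?_
  rw [lintegral_const_mul _ (by fun_prop), lintegral_add_left_eq_self u (-y)]

variable [μ.IsNegInvariant]

theorem lintegral_comp_neg_add (u : G → ℝ≥0∞) (x : G) : ∫⁻ y, u (-y + x) ∂μ = ∫⁻ y, u y ∂μ := by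
  simp only [neg_add_eq_sub, lintegral_sub_left_eq_self]

theorem lconvolution_le_mul_lintegral {M : ℝ≥0∞} (hM : ∀ x, h x ≤ M) (hu : Measurable u) (x : G) :
    (h ⋆ₗ[μ] u) x ≤ M * ∫⁻ y, u y ∂μ :=
  calc (h ⋆ₗ[μ] u) x ≤ ∫⁻ y, M * u (-y + x) ∂μ := by
        rw [lconvolution_def]
        gcongr with y
        exact hM y
    _ = M * ∫⁻ y, u y ∂μ := by
        rw [lintegral_const_mul _ (by fun_prop), lintegral_comp_neg_add]

theorem lconvolution_le_lintegral_mul_eLpNormEssSup (hh : Measurable h) (x : G) :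
    (h ⋆ₗ[μ] u) x ≤ (∫⁻ y, h y ∂μ) * eLpNormEssSup u μ := by
  have hux : ∀ᵐ y ∂μ, u (-y + x) ≤ eLpNormEssSup u μ := by
    simpa only [neg_add_eq_sub, enorm_eq_self] using
      (Measure.measurePreserving_sub_left μ x).quasiMeasurePreserving.ae
        (enorm_ae_le_eLpNormEssSup u μ)
  rw [lconvolution_def, ← lintegral_mul_const _ hh]
  refine lintegral_mono_ae ?_
  filter_upwards [hux] with y hy
  gcongr

variable [SFinite μ]

theorem eLpNorm_lconvolution_le (hh : Measurable h) (hu : Measurable u) (hr : 1 ≤ r) :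
    eLpNorm (h ⋆ₗ[μ] u) r μ ≤ (∫⁻ x, h x ∂μ) * eLpNorm u r μ := by
  rcases eq_or_ne r ∞ with rfl | hr_top
  · simp only [eLpNorm_exponent_top]
    exact eLpNormEssSup_le_of_ae_enorm_bound
      (.of_forall fun x => lconvolution_le_lintegral_mul_eLpNormEssSup hh x)
  have hr₀ : r ≠ 0 := (one_pos.trans_le hr).ne'
  set p := r.toReal
  have hp : 1 ≤ p := by simpa using ENNReal.toReal_mono hr_top hr
  have hp₀ : 0 < p := by positivity
  rw [eLpNorm_eq_lintegral_rpow_enorm_toReal hr₀ hr_top,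
    eLpNorm_eq_lintegral_rpow_enorm_toReal hr₀ hr_top]
  simp only [enorm_eq_self, one_div]
  rw [ENNReal.rpow_inv_le_iff hp₀]
  calc ∫⁻ x, (h ⋆ₗ[μ] u) x ^ p ∂μ
      ≤ ∫⁻ x, (∫⁻ y, h y ∂μ) ^ (p - 1) * (h ⋆ₗ[μ] fun y => u y ^ p) x ∂μ :=
        lintegral_mono fun x => rpow_lconvolution_le hh hu hp x
    _ = (∫⁻ y, h y ∂μ) ^ (p - 1) * ((∫⁻ y, h y ∂μ) * ∫⁻ y, u y ^ p ∂μ) := by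
        rw [lintegral_const_mul _ (by fun_prop), lintegral_lconvolution hh (by fun_prop)]
    _ = ((∫⁻ y, h y ∂μ) * (∫⁻ y, u y ^ p ∂μ) ^ p⁻¹) ^ p := by
        rw [ENNReal.mul_rpow_of_nonneg _ _ hp₀.le, ENNReal.rpow_inv_rpow hp₀.ne', ← mul_assoc]
        nth_rw 2 [← ENNReal.rpow_one (∫⁻ y, h y ∂μ)]
        rw [← ENNReal.rpow_add_of_nonneg _ _ (sub_nonneg.2 hp) zero_le_one, sub_add_cancel]

theorem eLpNorm_top_lconvolution_lt_top (hh : Measurable h) (hu : Measurable u) (hr : 1 ≤ r)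
    {M : ℝ≥0∞} (hM : M ≠ ∞) (hhM : ∀ x, h x ≤ M) (hhi : ∫⁻ x, h x ∂μ ≠ ∞)
    (hur : eLpNorm u r μ < ∞) : eLpNorm (h ⋆ₗ[μ] u) ∞ μ < ∞ := by
  rcases eq_or_ne r ∞ with rfl | hr_top
  · exact (eLpNorm_lconvolution_le hh hu le_top).trans_lt (ENNReal.mul_lt_top hhi.lt_top hur)
  have hr₀ : r ≠ 0 := (one_pos.trans_le hr).ne'
  set p := r.toReal
  have hp : 1 ≤ p := by simpa using ENNReal.toReal_mono hr_top hr
  have hp₀ : 0 < p := by positivity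
  rw [eLpNorm_lt_top_iff_lintegral_rpow_enorm_lt_top hr₀ hr_top] at hur
  simp only [enorm_eq_self] at hur
  set B := (∫⁻ y, h y ∂μ) ^ (p - 1) * (M * ∫⁻ y, u y ^ p ∂μ)
  have hB : B < ∞ := ENNReal.mul_lt_top (ENNReal.rpow_lt_top_of_nonneg (sub_nonneg.2 hp) hhi)
    (ENNReal.mul_lt_top hM.lt_top hur)
  have hbound (x : G) : (h ⋆ₗ[μ] u) x ≤ B ^ p⁻¹ := by
    rw [ENNReal.le_rpow_inv_iff hp₀]
    exact (rpow_lconvolution_le hh hu hp x).trans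
      (mul_le_mul_right (lconvolution_le_mul_lintegral hhM (by fun_prop) x) _)
  exact (eLpNormEssSup_le_of_ae_enorm_bound (.of_forall hbound)).trans_lt
    (ENNReal.rpow_lt_top_of_nonneg (by positivity) hB.ne)

theorem eLpNorm_lconvolution_lt_top (hh : Measurable h) (hu : Measurable u) (hr : 1 ≤ r)
    (hrq : r ≤ q) {M : ℝ≥0∞} (hM : M ≠ ∞) (hhM : ∀ x, h x ≤ M) (hhi : ∫⁻ x, h x ∂μ ≠ ∞)
    (hur : eLpNorm u r μ < ∞) : eLpNorm (h ⋆ₗ[μ] u) q μ < ∞ :=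
  eLpNorm_lt_top_of_exponent_le_of_top (one_pos.trans_le hr).ne' hrq
    ((eLpNorm_lconvolution_le hh hu hr).trans_lt (ENNReal.mul_lt_top hhi.lt_top hur))
    (eLpNorm_top_lconvolution_lt_top hh hu hr hM hhM hhi hur)

end Young

section Cones

theorem le_norm_smul_sub_of_mem_ball {E : Type*} [NormedAddCommGroup E] [NormedSpace ℝ E]
    {Γ : Set E} (hΓ : ∀ ξ ∈ Γ, ∀ t : ℝ, 0 < t → t • ξ ∈ Γ) {ξ₀ ξ η : E} {ε t : ℝ} (hε : 0 < ε)
    (hball : Metric.ball ξ₀ (2 * ε) ⊆ Γ) (hξ : ξ ∈ Metric.ball ξ₀ ε) (ht : 0 < t) (hη : η ∉ Γ) :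
    ε / (‖ξ₀‖ + ε) * ‖t • ξ‖ ≤ ‖t • ξ - η‖ := by
  have hη' : t⁻¹ • η ∉ Metric.ball ξ₀ (2 * ε) := fun hmem =>
    hη (by simpa only [smul_inv_smul₀ ht.ne'] using hΓ _ (hball hmem) t ht)
  rw [Metric.mem_ball, dist_eq_norm] at hξ hη'
  have hnorm : ‖ξ‖ ≤ ‖ξ₀‖ + ε := by linarith [norm_le_norm_add_norm_sub' ξ ξ₀]
  have hdist : ε ≤ ‖ξ - t⁻¹ • η‖ := by
    linarith [norm_sub_le_norm_sub_add_norm_sub (t⁻¹ • η) ξ ξ₀, norm_sub_rev ξ (t⁻¹ • η)]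
  calc ε / (‖ξ₀‖ + ε) * ‖t • ξ‖ = t * (ε * (‖ξ‖ / (‖ξ₀‖ + ε))) := by
        rw [norm_smul, Real.norm_of_nonneg ht.le]; ring
    _ ≤ t * (ε * 1) := by
        gcongr
        exact div_le_one_of_le₀ hnorm (by positivity)
    _ ≤ t * ‖ξ - t⁻¹ • η‖ := by rw [mul_one]; gcongr
    _ = ‖t • ξ - η‖ := by
        rw [← Real.norm_of_nonneg ht.le, ← norm_smul, Real.norm_of_nonneg ht.le, smul_sub,
          smul_inv_smul₀ ht.ne']

theorem exists_isCone_mul_norm_le_norm_sub {Γ : Set (EuclideanSpace ℝ (Fin d))} (ho : IsOpen Γ)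
    (hΓ : IsCone Γ) {ξ₀ : EuclideanSpace ℝ (Fin d)} (hξ₀ : ξ₀ ∈ Γ) :
    ∃ Γ' : Set (EuclideanSpace ℝ (Fin d)), IsOpen Γ' ∧ IsCone Γ' ∧ ξ₀ ∈ Γ' ∧
      ∃ c : ℝ, 0 < c ∧ ∀ ξ ∈ Γ', ∀ η ∉ Γ, c * ‖ξ‖ ≤ ‖ξ - η‖ := by
  obtain ⟨δ, hδ, hball⟩ := Metric.isOpen_iff.1 ho ξ₀ hξ₀
  obtain ⟨ε, rfl⟩ : ∃ ε, δ = 2 * ε := ⟨δ / 2, by ring⟩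
  have hε : 0 < ε := by linarith
  have hsub : Metric.ball ξ₀ ε ⊆ Γ := (Metric.ball_subset_ball (by linarith)).trans hball
  refine ⟨⋃ t ∈ Ioi (0 : ℝ), t • Metric.ball ξ₀ ε, ?_, ⟨?_, ?_⟩, ?_, ε / (‖ξ₀‖ + ε),
    by positivity, ?_⟩
  · exact isOpen_biUnion fun t ht => Metric.isOpen_ball.smul₀ (ne_of_gt ht)
  · simp only [mem_iUnion, not_exists]
    rintro t ht ⟨ξ, hξ, hzero⟩
    exact hΓ.1 (hzero ▸ hΓ.2 ξ (hsub hξ) t ht)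
  · simp only [mem_iUnion]
    rintro _ ⟨t, ht, ξ, hξ, rfl⟩ u hu
    exact ⟨u * t, mul_pos hu ht, ξ, hξ, mul_smul u t ξ⟩
  · simp only [mem_iUnion]
    exact ⟨1, mem_Ioi.2 one_pos, ξ₀, Metric.mem_ball_self hε, one_smul ℝ ξ₀⟩
  · simp only [mem_iUnion]
    rintro _ ⟨t, ht, ξ, hξ, rfl⟩ η hη
    exact le_norm_smul_sub_of_mem_ball hΓ.2 hε hball hξ ht hη

end Cones

section SubexpDecay

variable {V F : Type*} [NormedAddCommGroup V] [NormedAddCommGroup F] {a : ℝ}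

/-- The kernel `exp (-‖x‖ ^ a)`: bounded and integrable, it is what is left of a factor of
arbitrarily fast subexponential decay of order `a` once all weights have been absorbed. -/
def subexpKernel (a : ℝ) (x : V) : ℝ := Real.exp (-‖x‖ ^ a)

/-- Decay faster than every `exp (-N ‖ξ‖ ^ a)`, as required of `FT φ`, with `a = 1 / s`, for an
`s`-cutoff `φ`. -/
def HasSubexpDecay (a : ℝ) (Φ : V → F) : Prop :=
  ∀ N : ℝ, 0 < N → ∃ C : ℝ, 0 < C ∧ ∀ ξ, ‖Φ ξ‖ ≤ C * Real.exp (-N * ‖ξ‖ ^ a)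

/-- The weight `θ` is moderate with respect to `exp (k ‖x‖ ^ a)` for some `k`: this is how an
`s`-admissible weight enters the estimates, its submultiplicative weight `v` being replaced by an
exponential majorant. -/
def IsSubexpModerate (a : ℝ) (θ : V → ℝ) : Prop :=
  ∃ A k : ℝ, 0 < A ∧ 0 < k ∧ ∀ x y, θ (x + y) ≤ A * Real.exp (k * ‖x‖ ^ a) * θ y

theorem subexpKernel_pos (x : V) : 0 < subexpKernel a x := Real.exp_pos _

theorem subexpKernel_le_one (x : V) : subexpKernel a x ≤ 1 :=
  Real.exp_le_one_iff.2 (neg_nonpos.2 (by positivity))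

theorem measurable_subexpKernel [MeasurableSpace V] [OpensMeasurableSpace V] :
    Measurable (subexpKernel a : V → ℝ) := by
  unfold subexpKernel
  fun_prop

theorem integrable_subexpKernel [NormedSpace ℝ V] [FiniteDimensional ℝ V] [MeasurableSpace V]
    [BorelSpace V] {μ : Measure V} [μ.IsAddHaarMeasure] (ha : 0 < a) :
    Integrable (subexpKernel a : V → ℝ) μ := by
  rcases subsingleton_or_nontrivial V with hV | hV
  · have : IsFiniteMeasure μ := ⟨(finite_univ : (univ : Set V).Finite).isCompact.measure_lt_top⟩
    exact .of_bound measurable_subexpKernel.aestronglyMeasurable 1 (.of_forall fun x =>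
      (Real.norm_of_nonneg (subexpKernel_pos x).le).trans_le (subexpKernel_le_one x))
  have hdim : (-1 : ℝ) < (Module.finrank ℝ V - 1 : ℕ) := by
    linarith [(Module.finrank ℝ V - 1).cast_nonneg (α := ℝ)]
  refine (integrable_fun_norm_addHaar μ (f := fun t => Real.exp (-t ^ a))).2 ?_
  simpa only [Real.rpow_natCast, smul_eq_mul] using integrableOn_rpow_mul_exp_neg_rpow hdim ha

theorem IsSAdmissible.isSubexpModerate {s : ℝ} {θ : EuclideanSpace ℝ (Fin d) → ℝ}
    (hθ : IsSAdmissible s θ) : IsSubexpModerate (1 / s) θ := by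
  obtain ⟨-, hθ_pos, v, -, -, -, -, C₀, k₀, C₁, hC₀, hk₀, hC₁, hv, hmod⟩ := hθ
  refine ⟨C₁ * C₀, k₀, by positivity, hk₀, fun x y => ?_⟩
  calc θ (x + y) ≤ C₁ * v x * θ y := hmod x y
    _ ≤ C₁ * (C₀ * Real.exp (k₀ * ‖x‖ ^ (1 / s))) * θ y :=
        mul_le_mul_of_nonneg_right (mul_le_mul_of_nonneg_left (hv x) hC₁.le) (hθ_pos y).le
    _ = C₁ * C₀ * Real.exp (k₀ * ‖x‖ ^ (1 / s)) * θ y := by ring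

variable {Φ : V → F} {θ : V → ℝ}

theorem HasSubexpDecay.exists_norm_mul_apply_add_le (hΦ : HasSubexpDecay a Φ)
    (hθ : IsSubexpModerate a θ) (hθ₀ : ∀ x, 0 ≤ θ x) :
    ∃ D : ℝ, 0 ≤ D ∧ ∀ x y, ‖Φ x‖ * θ (x + y) ≤ D * (subexpKernel a x * θ y) := by
  obtain ⟨A, k, hA, hk, hmod⟩ := hθ
  obtain ⟨C, hC, hdecay⟩ := hΦ (k + 1) (by positivity)
  refine ⟨C * A, by positivity, fun x y => ?_⟩
  calc ‖Φ x‖ * θ (x + y)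
      ≤ C * Real.exp (-(k + 1) * ‖x‖ ^ a) * (A * Real.exp (k * ‖x‖ ^ a) * θ y) :=
        mul_le_mul (hdecay x) (hmod x y) (hθ₀ _) (by positivity)
    _ = C * A * (Real.exp (-(k + 1) * ‖x‖ ^ a) * Real.exp (k * ‖x‖ ^ a) * θ y) := by ring
    _ = C * A * (subexpKernel a x * θ y) := by
        rw [← Real.exp_add, subexpKernel]; ring_nf

theorem HasSubexpDecay.exists_norm_mul_le_of_mul_norm_le (hΦ : HasSubexpDecay a Φ)
    (hθ : IsSubexpModerate a θ) (hθ₀ : ∀ x, 0 ≤ θ x) (ha : 0 ≤ a) {c : ℝ} (hc : 0 < c) :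
    ∃ D : ℝ, 0 ≤ D ∧ ∀ x y, c * ‖x‖ ≤ ‖y‖ →
      ‖Φ y‖ * θ x ≤ D * (subexpKernel a y * subexpKernel a x) := by
  obtain ⟨A, k, hA, hk, hmod⟩ := hθ
  obtain ⟨C, hC, hdecay⟩ := hΦ (1 + (k + 1) / c ^ a) (by positivity)
  have hA₀ := mul_nonneg hA.le (hθ₀ 0)
  refine ⟨C * (A * θ 0), by positivity, fun x y hxy => ?_⟩
  have hpow : ‖x‖ ^ a ≤ ‖y‖ ^ a / c ^ a := by
    rw [le_div_iff₀' (by positivity), ← Real.mul_rpow hc.le (norm_nonneg x)]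
    gcongr
  have hexp : -(1 + (k + 1) / c ^ a) * ‖y‖ ^ a + k * ‖x‖ ^ a ≤ -‖y‖ ^ a + -‖x‖ ^ a := by
    linear_combination (k + 1) * hpow
  have hθx : θ x ≤ A * Real.exp (k * ‖x‖ ^ a) * θ 0 := by simpa only [add_zero] using hmod x 0
  calc ‖Φ y‖ * θ x
      ≤ C * Real.exp (-(1 + (k + 1) / c ^ a) * ‖y‖ ^ a) * (A * Real.exp (k * ‖x‖ ^ a) * θ 0) :=
        mul_le_mul (hdecay y) hθx (hθ₀ x) (by positivity)
    _ = C * (A * θ 0) * Real.exp (-(1 + (k + 1) / c ^ a) * ‖y‖ ^ a + k * ‖x‖ ^ a) := by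
        rw [Real.exp_add]; ring
    _ ≤ C * (A * θ 0) * Real.exp (-‖y‖ ^ a + -‖x‖ ^ a) := by gcongr
    _ = C * (A * θ 0) * (subexpKernel a y * subexpKernel a x) := by rw [Real.exp_add]; rfl

variable {F' : Type*} [NormedAddCommGroup F'] {G : V → F'} {B c : ℝ} {Γ Γ' : Set V}

theorem HasSubexpDecay.exists_norm_mul_norm_mul_le (hΦ : HasSubexpDecay a Φ)
    (hθ : IsSubexpModerate a θ) (hθ₀ : ∀ x, 0 ≤ θ x) (hG : ∀ x, ‖G x‖ ≤ B) (ha : 0 ≤ a)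
    (hc : 0 < c) (hsep : ∀ ξ ∈ Γ', ∀ η ∉ Γ, c * ‖ξ‖ ≤ ‖ξ - η‖) :
    ∃ D : ℝ, ∀ ξ ∈ Γ', ∀ y, ‖Φ y‖ * ‖G (-y + ξ)‖ * θ ξ ≤ D * (subexpKernel a y *
      (Γ.indicator (fun η => ‖G η‖ * θ η) (-y + ξ) + subexpKernel a ξ)) := by
  obtain ⟨D₁, hD₁, hnear⟩ := hΦ.exists_norm_mul_apply_add_le hθ hθ₀
  obtain ⟨D₂, hD₂, hfar⟩ := hΦ.exists_norm_mul_le_of_mul_norm_le hθ hθ₀ ha hc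
  have hB : 0 ≤ B := (norm_nonneg _).trans (hG 0)
  refine ⟨D₁ + D₂ * B, fun ξ hξ y => ?_⟩
  have hy := subexpKernel_pos (a := a) y
  have hξ' := subexpKernel_pos (a := a) ξ
  by_cases hmem : -y + ξ ∈ Γ
  · rw [indicator_of_mem hmem]
    have hθy := hθ₀ (-y + ξ)
    calc ‖Φ y‖ * ‖G (-y + ξ)‖ * θ ξ = ‖G (-y + ξ)‖ * (‖Φ y‖ * θ (y + (-y + ξ))) := by
          rw [add_neg_cancel_left]; ring
      _ ≤ ‖G (-y + ξ)‖ * (D₁ * (subexpKernel a y * θ (-y + ξ))) :=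
        mul_le_mul_of_nonneg_left (hnear _ _) (norm_nonneg _)
      _ = D₁ * (subexpKernel a y * (‖G (-y + ξ)‖ * θ (-y + ξ))) := by ring
      _ ≤ _ := by
        gcongr
        · exact le_add_of_nonneg_right (by positivity)
        · exact le_add_of_nonneg_right hξ'.le
  · rw [indicator_of_notMem hmem, zero_add]
    have hdist : c * ‖ξ‖ ≤ ‖y‖ := by
      simpa only [neg_add_eq_sub, sub_sub_cancel] using hsep ξ hξ _ hmem
    calc ‖Φ y‖ * ‖G (-y + ξ)‖ * θ ξ = ‖G (-y + ξ)‖ * (‖Φ y‖ * θ ξ) := by ring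
      _ ≤ B * (D₂ * (subexpKernel a y * subexpKernel a ξ)) :=
        mul_le_mul (hG _) (hfar ξ y hdist) (mul_nonneg (norm_nonneg _) (hθ₀ ξ)) hB
      _ = D₂ * B * (subexpKernel a y * subexpKernel a ξ) := by ring
      _ ≤ _ := by
        gcongr
        exact le_add_of_nonneg_left hD₁

variable [NormedSpace ℝ V] [FiniteDimensional ℝ V] [MeasurableSpace V] [BorelSpace V]
  {μ : Measure V} [μ.IsAddHaarMeasure]

theorem HasSubexpDecay.integrable (hΦ : HasSubexpDecay a Φ) (ha : 0 < a)
    (hΦm : AEStronglyMeasurable Φ μ) : Integrable Φ μ := by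
  obtain ⟨C, -, hC⟩ := hΦ 1 one_pos
  refine ((integrable_subexpKernel ha).const_mul C).mono' hΦm (.of_forall fun ξ => ?_)
  simpa only [neg_mul, one_mul] using! hC ξ

theorem HasSubexpDecay.exists_lconvolution_enorm_mul_le (hΦ : HasSubexpDecay a Φ)
    (hθ : IsSubexpModerate a θ) (hθ₀ : ∀ x, 0 ≤ θ x) (hG : ∀ x, ‖G x‖ ≤ B) (ha : 0 < a)
    (hc : 0 < c) (hsep : ∀ ξ ∈ Γ', ∀ η ∉ Γ, c * ‖ξ‖ ≤ ‖ξ - η‖) :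
    ∃ D : ℝ≥0, ∀ ξ ∈ Γ', ((‖Φ ·‖ₑ) ⋆ₗ[μ] (‖G ·‖ₑ)) ξ * ‖θ ξ‖ₑ ≤
      D * (((‖subexpKernel a ·‖ₑ) ⋆ₗ[μ] (‖Γ.indicator (fun η => ‖G η‖ * θ η) ·‖ₑ)) ξ +
        ‖subexpKernel a ξ‖ₑ) := by
  obtain ⟨D, hbound⟩ := hΦ.exists_norm_mul_norm_mul_le hθ hθ₀ hG ha.le hc hsep
  set κ : V → ℝ≥0∞ := (‖subexpKernel a ·‖ₑ)
  set u : V → ℝ≥0∞ := (‖Γ.indicator (fun η => ‖G η‖ * θ η) ·‖ₑ)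
  have hκ : Measurable κ := measurable_subexpKernel.enorm
  have hκ_int : ∫⁻ y, κ y ∂μ ≠ ∞ := (integrable_subexpKernel ha).2.ne
  have hpointwise (ξ) (hξ : ξ ∈ Γ') (y : V) :
      ‖Φ y‖ₑ * ‖G (-y + ξ)‖ₑ * ‖θ ξ‖ₑ ≤ ‖D‖ₑ * (κ y * u (-y + ξ) + κ y * κ ξ) := by
    rw [← mul_add]
    calc ‖Φ y‖ₑ * ‖G (-y + ξ)‖ₑ * ‖θ ξ‖ₑ = ‖‖Φ y‖ * ‖G (-y + ξ)‖ * θ ξ‖ₑ := by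
          simp only [enorm_mul, enorm_norm]
      _ ≤ ‖D * (subexpKernel a y *
            (Γ.indicator (fun η => ‖G η‖ * θ η) (-y + ξ) + subexpKernel a ξ))‖ₑ :=
          enorm_le_iff_norm_le.2 (abs_le_abs_of_nonneg
            (mul_nonneg (by positivity) (hθ₀ ξ)) (hbound ξ hξ y))
      _ ≤ ‖D‖ₑ * (κ y * (u (-y + ξ) + κ ξ)) := by
          rw [enorm_mul, enorm_mul]
          gcongr
          exact enorm_add_le _ _
  refine ⟨‖D‖₊ * (1 + (∫⁻ y, κ y ∂μ).toNNReal), fun ξ hξ => ?_⟩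
  rw [ENNReal.coe_mul, ENNReal.coe_add, ENNReal.coe_one, ENNReal.coe_toNNReal hκ_int, mul_assoc]
  calc ((‖Φ ·‖ₑ) ⋆ₗ[μ] (‖G ·‖ₑ)) ξ * ‖θ ξ‖ₑ
      = ∫⁻ y, ‖Φ y‖ₑ * ‖G (-y + ξ)‖ₑ * ‖θ ξ‖ₑ ∂μ := (lintegral_mul_const' _ _ enorm_ne_top).symm
    _ ≤ ∫⁻ y, ‖D‖ₑ * (κ y * u (-y + ξ) + κ y * κ ξ) ∂μ := lintegral_mono (hpointwise ξ hξ)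
    _ = ‖D‖ₑ * ((κ ⋆ₗ[μ] u) ξ + (∫⁻ y, κ y ∂μ) * κ ξ) := by
        rw [lintegral_const_mul' _ _ enorm_ne_top, lintegral_add_right _ (by fun_prop),
          lintegral_mul_const _ hκ, lconvolution_def]
    _ ≤ ‖D‖ₑ * ((1 + ∫⁻ y, κ y ∂μ) * ((κ ⋆ₗ[μ] u) ξ + κ ξ)) := by
        rw [mul_add (1 + _)]
        gcongr
        · exact le_mul_of_one_le_left' le_self_add
        · exact le_add_self

theorem HasSubexpDecay.eLpNorm_lconvolution_enorm_mul_lt_top (hΦ : HasSubexpDecay a Φ)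
    (hθ : IsSubexpModerate a θ) (hθ₀ : ∀ x, 0 ≤ θ x) (hθm : Measurable θ)
    (hG : ∀ x, ‖G x‖ ≤ B) (hGm : Measurable (‖G ·‖)) (ha : 0 < a) (hc : 0 < c)
    (hsep : ∀ ξ ∈ Γ', ∀ η ∉ Γ, c * ‖ξ‖ ≤ ‖ξ - η‖) (hΓ : MeasurableSet Γ) (hΓ' : MeasurableSet Γ')
    {r q : ℝ≥0∞} (hr : 1 ≤ r) (hrq : r ≤ q)
    (hfin : eLpNorm (fun ξ => ‖G ξ‖ * θ ξ) r (μ.restrict Γ) < ∞) :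
    eLpNorm (fun ξ => ((‖Φ ·‖ₑ) ⋆ₗ[μ] (‖G ·‖ₑ)) ξ * ‖θ ξ‖ₑ) q (μ.restrict Γ') < ∞ := by
  obtain ⟨D, hD⟩ := hΦ.exists_lconvolution_enorm_mul_le (μ := μ) hθ hθ₀ hG ha hc hsep
  set κ : V → ℝ≥0∞ := (‖subexpKernel a ·‖ₑ)
  set u : V → ℝ≥0∞ := (‖Γ.indicator (fun η => ‖G η‖ * θ η) ·‖ₑ)
  have hκ : Measurable κ := measurable_subexpKernel.enorm
  have hu : Measurable u := ((hGm.mul hθm).indicator hΓ).enorm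
  have hκ_le (x : V) : κ x ≤ 1 := by
    rw [← enorm_one (G := ℝ)]
    exact enorm_le_iff_norm_le.2
      (abs_le_abs_of_nonneg (subexpKernel_pos x).le (subexpKernel_le_one x))
  have hκ_int : ∫⁻ y, κ y ∂μ < ∞ := (integrable_subexpKernel ha).2
  have hu_fin : eLpNorm u r μ < ∞ := by
    rwa [eLpNorm_enorm, eLpNorm_indicator_eq_eLpNorm_restrict hΓ]
  have hκu_fin : eLpNorm (κ ⋆ₗ[μ] u) q μ < ∞ :=
    eLpNorm_lconvolution_lt_top hκ hu hr hrq ENNReal.one_ne_top hκ_le hκ_int.ne hu_fin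
  have hκ_fin : eLpNorm κ q μ < ∞ :=
    eLpNorm_lt_top_of_exponent_le_of_top one_ne_zero (hr.trans hrq)
      (by simpa only [eLpNorm_one_eq_lintegral_enorm, enorm_eq_self] using hκ_int)
      ((eLpNormEssSup_le_of_ae_enorm_bound (.of_forall hκ_le)).trans_lt ENNReal.one_lt_top)
  have hsum : eLpNorm (κ ⋆ₗ[μ] u + κ) q (μ.restrict Γ') < ∞ :=
    calc eLpNorm (κ ⋆ₗ[μ] u + κ) q (μ.restrict Γ') ≤ eLpNorm (κ ⋆ₗ[μ] u + κ) q μ :=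
          eLpNorm_mono_measure _ Measure.restrict_le_self
      _ ≤ eLpNorm (κ ⋆ₗ[μ] u) q μ + eLpNorm κ q μ :=
          eLpNorm_add_le (Measurable.aestronglyMeasurable (by fun_prop)) hκ.aestronglyMeasurable
            (hr.trans hrq)
      _ < ∞ := ENNReal.add_lt_top.2 ⟨hκu_fin, hκ_fin⟩
  refine (eLpNorm_le_mul_eLpNorm_of_ae_le_mul' (c := D) ?_ q).trans_lt
    (ENNReal.mul_lt_top ENNReal.coe_lt_top hsum)
  exact (ae_restrict_iff' hΓ').2 (.of_forall hD)

end SubexpDecay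

section Fourier

theorem fourier_smul_eq_convolution {V E : Type*} [NormedAddCommGroup V] [InnerProductSpace ℝ V]
    [FiniteDimensional ℝ V] [MeasurableSpace V] [BorelSpace V] [NormedAddCommGroup E]
    [NormedSpace ℂ E] [CompleteSpace E] {φ : V → ℂ} {g : V → E} (hφc : Continuous φ)
    (hφ : Integrable φ) (hFφ : Integrable (𝓕 φ)) (hg : Integrable g) (w : V) :
    𝓕 (fun x => φ x • g x) w = (𝓕 φ ⋆[ContinuousLinearMap.lsmul ℂ ℂ] 𝓕 g) w := by
  have hinv : 𝓕 (fun v => 𝓕 φ (-v)) = φ := by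
    rw [← Real.fourierInv_eq_fourier_comp_neg, hφc.fourierInv_fourier_eq hφ hFφ]
  have hmod : Integrable fun x => Real.fourierChar (-⟪x, w⟫) • g x :=
    (Real.fourierIntegral_convergent_iff w).2 hg
  have hshift (v : V) : 𝓕 (fun x => Real.fourierChar (-⟪x, w⟫) • g x) (-v) = 𝓕 g (w - v) := by
    simp only [Real.fourier_eq, smul_smul, ← AddChar.map_add_eq_mul, inner_sub_right,
      inner_neg_right, neg_sub, neg_neg, ← sub_eq_add_neg]
  have hflip := VectorFourier.integral_fourierIntegral_smul_eq_flip (μ := volume) (ν := volume)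
    (L := innerₗ V) Real.continuous_fourierChar (by exact continuous_inner) hFφ.comp_neg hmod
  rw [flip_innerₗ] at hflip
  calc 𝓕 (fun x => φ x • g x) w = ∫ x, φ x • Real.fourierChar (-⟪x, w⟫) • g x := by
        simp only [Real.fourier_eq, smul_comm (φ _)]
    _ = ∫ x, 𝓕 (fun v => 𝓕 φ (-v)) x • Real.fourierChar (-⟪x, w⟫) • g x := by rw [hinv]
    _ = ∫ v, 𝓕 φ (-v) • 𝓕 (fun x => Real.fourierChar (-⟪x, w⟫) • g x) v := hflip
    _ = ∫ v, 𝓕 φ v • 𝓕 (fun x => Real.fourierChar (-⟪x, w⟫) • g x) (-v) := by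
        rw [← integral_neg_eq_self]
        simp only [neg_neg]
    _ = (𝓕 φ ⋆[ContinuousLinearMap.lsmul ℂ ℂ] 𝓕 g) w := by
        simp only [hshift, convolution_lsmul]

variable {f φ g : EuclideanSpace ℝ (Fin d) → ℂ}

theorem FT_eq_fourier (f : EuclideanSpace ℝ (Fin d) → ℂ) (ξ : EuclideanSpace ℝ (Fin d)) :
    FT f ξ = ((2 * Real.pi) ^ (-(d : ℝ) / 2) : ℝ) * 𝓕 f ((2 * Real.pi)⁻¹ • ξ) := by
  rw [FT, Real.fourier_eq']
  congr 1
  refine integral_congr_ae (.of_forall fun x => ?_)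
  simp only [smul_eq_mul]
  rw [mul_comm, inner_smul_right]
  congr 3
  push_cast
  field_simp

theorem fourier_eq_FT (f : EuclideanSpace ℝ (Fin d) → ℂ) (ξ : EuclideanSpace ℝ (Fin d)) :
    𝓕 f ξ = ((2 * Real.pi) ^ (-(d : ℝ) / 2) : ℝ)⁻¹ * FT f ((2 * Real.pi) • ξ) := by
  have hc : (2 * Real.pi) ^ (-(d : ℝ) / 2) ≠ 0 := by positivity
  rw [FT_eq_fourier, inv_smul_smul₀ (by positivity), Complex.ofReal_inv,
    inv_mul_cancel_left₀ (Complex.ofReal_ne_zero.2 hc)]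

theorem continuous_FT (hf : Integrable f) : Continuous (FT f) := by
  have hcont : Continuous (𝓕 f) := VectorFourier.fourierIntegral_continuous
    Real.continuous_fourierChar (by exact continuous_inner) hf
  rw [funext (FT_eq_fourier f)]
  fun_prop

theorem norm_FT_le (f : EuclideanSpace ℝ (Fin d) → ℂ) (ξ : EuclideanSpace ℝ (Fin d)) :
    ‖FT f ξ‖ ≤ (2 * Real.pi) ^ (-(d : ℝ) / 2) * ∫ x, ‖f x‖ := by
  rw [FT_eq_fourier, norm_mul, Complex.norm_real, Real.norm_of_nonneg (by positivity)]
  gcongr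
  exact VectorFourier.norm_fourierIntegral_le_integral_norm ..

theorem FT_mul_eq_convolution (hφc : Continuous φ) (hφ : Integrable φ) (hFφ : Integrable (FT φ))
    (hg : Integrable g) (ξ : EuclideanSpace ℝ (Fin d)) :
    FT (fun x => φ x * g x) ξ = ((2 * Real.pi) ^ (-(d : ℝ) / 2) : ℝ) *
      (FT φ ⋆[ContinuousLinearMap.mul ℂ ℂ] FT g) ξ := by
  set c : ℝ := (2 * Real.pi) ^ (-(d : ℝ) / 2) with hc
  have hc₂ : 0 < c ^ 2 := by positivity
  have hscale : ((2 * Real.pi) ^ d)⁻¹ = c ^ 2 := by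
    rw [hc, ← Real.rpow_natCast, ← Real.rpow_natCast, ← Real.rpow_mul (by positivity),
      ← Real.rpow_neg (by positivity)]
    push_cast
    ring_nf
  have hF : Integrable (𝓕 φ) := by
    rw [funext (fourier_eq_FT φ)]
    exact (hFφ.comp_smul (by positivity)).const_mul _
  have hpt (v : EuclideanSpace ℝ (Fin d)) : 𝓕 φ v * 𝓕 g ((2 * Real.pi)⁻¹ • ξ - v) =
      ((c ^ 2)⁻¹ : ℝ) * (FT φ ((2 * Real.pi) • v) * FT g (ξ - (2 * Real.pi) • v)) := by
    rw [fourier_eq_FT, fourier_eq_FT, ← hc, smul_sub, smul_inv_smul₀ (by positivity)]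
    push_cast
    ring
  have hsubst := Measure.integral_comp_smul (volume : Measure (EuclideanSpace ℝ (Fin d)))
    (fun ζ => FT φ ζ * FT g (ξ - ζ)) (2 * Real.pi)
  rw [finrank_euclideanSpace_fin, hscale, abs_of_pos hc₂] at hsubst
  calc FT (fun x => φ x * g x) ξ
      = c * ∫ v, 𝓕 φ v * 𝓕 g ((2 * Real.pi)⁻¹ • ξ - v) := by
        rw [FT_eq_fourier]
        exact congrArg _ (fourier_smul_eq_convolution hφc hφ hF hg _)
    _ = c * (((c ^ 2)⁻¹ : ℝ) * ((c ^ 2 : ℝ) • ∫ ζ, FT φ ζ * FT g (ξ - ζ))) := by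
        simp only [hpt]
        rw [integral_const_mul, hsubst]
    _ = c * (FT φ ⋆[ContinuousLinearMap.mul ℂ ℂ] FT g) ξ := by
        rw [← Complex.real_smul (x := (c ^ 2)⁻¹), inv_smul_smul₀ hc₂.ne', convolution_mul]

theorem enorm_FT_mul_le (hφc : Continuous φ) (hφ : Integrable φ) (hFφ : Integrable (FT φ))
    (hg : Integrable g) (ξ : EuclideanSpace ℝ (Fin d)) :
    ‖FT (fun x => φ x * g x) ξ‖ₑ ≤
      ‖(2 * Real.pi) ^ (-(d : ℝ) / 2)‖ₑ * ((‖FT φ ·‖ₑ) ⋆ₗ (‖FT g ·‖ₑ)) ξ := by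
  rw [FT_mul_eq_convolution hφc hφ hFφ hg, enorm_mul, convolution_mul, lconvolution_def]
  gcongr
  · rw [enorm_le_iff_norm_le, Complex.norm_real]
  · refine (enorm_integral_le_lintegral_enorm _).trans_eq (lintegral_congr fun ζ => ?_)
    rw [enorm_mul, neg_add_eq_sub]

end Fourier

theorem FLSemi_mul_lt_top {s C c : ℝ} {r q : ℝ≥0∞} {ω θ : EuclideanSpace ℝ (Fin d) → ℝ}
    {φ g : EuclideanSpace ℝ (Fin d) → ℂ} {Γ Γ' : Set (EuclideanSpace ℝ (Fin d))} (hs : 0 < s)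
    (hr : 1 ≤ r) (hrq : r ≤ q) (hθ : IsSAdmissible s θ) (hωθ : ∀ ξ, |ω ξ| ≤ C * θ ξ)
    (hg : Integrable g) (hφc : Continuous φ) (hφ : Integrable φ)
    (hdecay : HasSubexpDecay (1 / s) (FT φ)) (hΓ : IsOpen Γ) (hΓ' : IsOpen Γ') (hc : 0 < c)
    (hsep : ∀ ξ ∈ Γ', ∀ η ∉ Γ, c * ‖ξ‖ ≤ ‖ξ - η‖) (hfin : FLSemi θ r g Γ < ∞) :
    FLSemi ω q (fun x => φ x * g x) Γ' < ∞ := by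
  have ha : 0 < 1 / s := one_div_pos.2 hs
  have hFφ : Integrable (FT φ) := hdecay.integrable ha (continuous_FT hφ).aestronglyMeasurable
  have hω (ξ) : ‖ω ξ‖ₑ ≤ ‖C‖ₑ * ‖θ ξ‖ₑ := by
    rw [← enorm_mul, enorm_le_iff_norm_le]
    exact (hωθ ξ).trans (le_abs_self _)
  have hbound (ξ) : ‖‖FT (fun x => φ x * g x) ξ‖ * ω ξ‖ₑ ≤
      (‖(2 * Real.pi) ^ (-(d : ℝ) / 2)‖₊ * ‖C‖₊ : ℝ≥0) *
        ‖((‖FT φ ·‖ₑ) ⋆ₗ (‖FT g ·‖ₑ)) ξ * ‖θ ξ‖ₑ‖ₑ := by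
    rw [enorm_mul, enorm_norm, enorm_eq_self, ENNReal.coe_mul, mul_mul_mul_comm]
    exact mul_le_mul' (enorm_FT_mul_le hφc hφ hFφ hg ξ) (hω ξ)
  exact (eLpNorm_le_mul_eLpNorm_of_ae_le_mul' (.of_forall hbound) q).trans_lt
    (ENNReal.mul_lt_top ENNReal.coe_lt_top
      (hdecay.eLpNorm_lconvolution_enorm_mul_lt_top hθ.isSubexpModerate (fun ξ => (hθ.2.1 ξ).le)
        hθ.1 (norm_FT_le g) (continuous_FT hg).norm.measurable ha hc hsep hΓ.measurableSet
        hΓ'.measurableSet hr hrq hfin))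

theorem stmt3_general {d : ℕ} {s : ℝ} (hs : 0 < s) {r q : ℝ≥0∞} (hr : 1 ≤ r) (hrq : r ≤ q)
    {ω θ : EuclideanSpace ℝ (Fin d) → ℝ} (hθ : IsSAdmissible s θ) {C : ℝ}
    (hωθ : ∀ ξ, |ω ξ| ≤ C * θ ξ) {f φ : EuclideanSpace ℝ (Fin d) → ℂ}
    (hf : LocallyIntegrable f) (hφc : Continuous φ) (hφ : Integrable φ)
    (hdecay : HasSubexpDecay (1 / s) (FT φ)) :
    WF_FL s q ω (fun x => φ x * f x) ⊆ WF_FL s r θ f := by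
  rintro ⟨x₀, ξ₀⟩ ⟨hξ₀, hsing⟩
  refine ⟨hξ₀, fun ψ hψ hψx₀ Γ hΓ hcone hξ₀Γ => ?_⟩
  by_contra hreg
  obtain ⟨Γ', hΓ', hcone', hξ₀Γ', c, hc, hsep⟩ := exists_isCone_mul_norm_le_norm_sub hΓ hcone hξ₀Γ
  have hψf : Integrable fun x => ψ x * f x :=
    hf.integrable_smul_left_of_hasCompactSupport hψ.1.continuous hψ.2.1
  have hreg' : FLSemi ω q (fun x => φ x * (ψ x * f x)) Γ' < ∞ :=
    FLSemi_mul_lt_top hs hr hrq hθ hωθ hψf hφc hφ hdecay hΓ hΓ' hc hsep (lt_top_iff_ne_top.2 hreg)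
  refine hreg'.ne ?_
  simpa only [mul_left_comm] using hsing ψ hψ hψx₀ Γ' hΓ' hcone' hξ₀Γ'

theorem stmt3 {d : ℕ} (s : ℝ) (hs : 1 < s) (r q : ℝ≥0∞) (hr : 1 ≤ r) (hrq : r ≤ q)
    (ω θ : EuclideanSpace ℝ (Fin d) → ℝ) (hω : IsSAdmissible s ω) (hθ : IsSAdmissible s θ)
    (C : ℝ) (hC : 0 < C) (hωθ : ∀ ξ, ω ξ ≤ C * θ ξ)
    (f : EuclideanSpace ℝ (Fin d) → ℂ) (hf : Integrable f) (hfc : HasCompactSupport f)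
    (φ : EuclideanSpace ℝ (Fin d) → ℂ) (hφ : IsSCutoff s φ) :
    WF_FL s q ω (fun x => φ x * f x) ⊆ WF_FL s r θ f := by
  exact stmt3_general (one_pos.trans hs) hr hrq hθ
    (fun ξ => (abs_of_pos (hω.2.1 ξ)).trans_le (hωθ ξ)) hf.locallyIntegrable hφ.1.continuous
    (hφ.1.continuous.integrable_of_hasCompactSupport hφ.2.1) hφ.2.2

end Paper
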